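/- (Invariance of the Minkowski norm for the 4D system) Let E, B : ℝ³ → ℝ³ be continuous and let (x, t, v, g) : I → ℝ³ × ℝ × ℝ³ × ℝ be a C¹ solution of the real 4D system ẋ(τ) = v(τ), ṫ(τ) = g(τ), v̇(τ) = g(τ) E(x(τ)) + v(τ) × B(x(τ)), ġ(τ) = E(x(τ)) · v(τ). Then the quantity g(τ)² − |v(τ)|² is constant on I. -/

import Mathlib

/-- The cross product on `EuclideanSpace ℝ (Fin 3)`. -/
noncomputable def crossE (a b : EuclideanSpace ℝ (Fin 3)) : EuclideanSpace ℝ (Fin 3) :=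
  (WithLp.equiv 2 (Fin 3 → ℝ)).symm
    (crossProduct (WithLp.equiv 2 (Fin 3 → ℝ) a) (WithLp.equiv 2 (Fin 3 → ℝ) b))

theorem inner_crossE_self (a b : EuclideanSpace ℝ (Fin 3)) :
    inner ℝ a (crossE a b) = (0 : ℝ) := by
  simp [crossE, PiLp.inner_apply, Fin.sum_univ_three, cross_apply]
  ring

/-- **Invariance of the Minkowski norm for the real 4D system.**
If `(x, t, v, g)` is a `C¹` solution on an interval `I` of
`ẋ = v`, `ṫ = g`, `v̇ = g E(x) + v × B(x)`, `ġ = E(x) · v` with `E, B` continuous,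
then `g(τ)² − |v(τ)|²` is constant on `I`. -/
theorem minkowski_invariant_4D
    (E B : EuclideanSpace ℝ (Fin 3) → EuclideanSpace ℝ (Fin 3))
    (hE : Continuous E) (hB : Continuous B)
    (I : Set ℝ) (hI : Convex ℝ I)
    (x v : ℝ → EuclideanSpace ℝ (Fin 3)) (t g : ℝ → ℝ)
    (hx : ∀ τ ∈ I, HasDerivWithinAt x (v τ) I τ)
    (ht : ∀ τ ∈ I, HasDerivWithinAt t (g τ) I τ)
    (hv : ∀ τ ∈ I,
      HasDerivWithinAt v (g τ • E (x τ) + crossE (v τ) (B (x τ))) I τ)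
    (hg : ∀ τ ∈ I, HasDerivWithinAt g (inner ℝ (E (x τ)) (v τ) : ℝ) I τ) :
    ∀ τ₁ ∈ I, ∀ τ₂ ∈ I, (g τ₁) ^ 2 - ‖v τ₁‖ ^ 2 = (g τ₂) ^ 2 - ‖v τ₂‖ ^ 2 := by
  have key : ∀ τ ∈ I,
      HasDerivWithinAt (fun s => (g s) ^ 2 - ‖v s‖ ^ 2) 0 I τ := by
    intro τ hτ
    have h := ((hg τ hτ).pow 2).sub ((hv τ hτ).norm_sq)
    refine h.congr_deriv ?_
    rw [inner_add_right, inner_crossE_self, inner_smul_right, real_inner_comm]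
    push_cast
    ring
  intro τ₁ h₁ τ₂ h₂
  have h := hI.norm_image_sub_le_of_norm_hasDerivWithin_le (C := 0) key
    (fun τ _ => by simp) h₂ h₁
  rw [zero_mul] at h
  exact sub_eq_zero.mp (norm_le_zero_iff.mp h)
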